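/- In the control construction, for every α : X → Bool the ballot J*_α on the subagenda Φ''_α is rational, sets the issue b to true, and has cumulative Hamming distance Dist(J*_α, J⃗|_{Φ''_α}) = 3m + 4 + 3u to the restricted profile J⃗|_{Φ''_α}. -/

import Mathlib

/-!
Extended constraint-based judgment aggregation: the control construction.
The full set Φ of issues is an inductive type; subagendas are `Finset`s of issues;
a ballot on a subagenda Ψ is a function `↥Ψ → Bool`, and it is rational if it extends
to a ballot on all of Φ satisfying the integrity constraint Γ.
-/

namespace Ctrl

/-- The full set Φ of issues of the control construction. -/
inductive Issue (n m : ℕ) : Type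
  | x : Fin n → Issue n m
  | x' : Fin n → Issue n m
  | y : Fin m → Issue n m
  | y' : Fin m → Issue n m
  | t : Fin m → Issue n m
  | a : Issue n m
  | b : Issue n m
  | u : Fin 3 → Fin (10 * n + 10 * m + 10) → Issue n m
  deriving DecidableEq, Fintype

variable {n m : ℕ}

/-- Hamming distance between two ballots on a (sub)agenda. -/
def hamming {I : Type*} [Fintype I] (r r' : I → Bool) : ℕ :=
  (Finset.univ.filter (fun i => r i ≠ r' i)).card

def bigA (r : Issue n m → Bool) : Prop := ∀ i, r (.x i) ≠ r (.x' i)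
def bigB (r : Issue n m → Bool) : Prop := ∀ j, r (.y j) ≠ r (.y' j)
def bigT (r : Issue n m → Bool) : Prop := ∀ j, r (.t j) = true

/-- The part Γ₀ of the integrity constraint. -/
def gamma0 (psi : (Fin n → Bool) → (Fin m → Bool) → Bool) (r : Issue n m → Bool) : Prop :=
  (r .a = true ∨ r .b = true) ∧ (r .a = false ∨ r .b = false) ∧
  (bigB r ∨ bigT r) ∧
  (bigA r →
    ((bigB r ∧ r .a = true ∧ psi (fun i => r (.x i)) (fun j => r (.y j)) = false) ∨
     (r .b = true ∧ ∀ j, r (.t j) = true ∧ r (.y j) = false ∧ r (.y' j) = false)))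

/-- The integrity constraint `Γ = Γ₀ ∨ ⋁_{i∈[3]} ⋀_{ℓ∈[u]} u_{i,ℓ}` on full ballots. -/
def Gamma (psi : (Fin n → Bool) → (Fin m → Bool) → Bool) (r : Issue n m → Bool) : Prop :=
  gamma0 psi r ∨ ∃ i : Fin 3, ∀ ℓ, r (.u i ℓ) = true

/-- A ballot on a subagenda Ψ is rational if it extends to a truth assignment of all
of Φ that satisfies Γ. -/
def rationalOn (psi : (Fin n → Bool) → (Fin m → Bool) → Bool)
    (Ψ : Finset (Issue n m)) (r : ↥Ψ → Bool) : Prop :=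
  ∃ r' : Issue n m → Bool, (∀ i : ↥Ψ, r' i.1 = r i) ∧ Gamma psi r'

/-- The restriction of a full ballot to a subagenda Ψ. -/
def restrict (Ψ : Finset (Issue n m)) (J : Issue n m → Bool) : ↥Ψ → Bool :=
  fun i => J i.1

/-- The profile J⃗ = (J₁, J₂, J₃): the ballot J_{k+1} sets all x- and x'-issues and
the issues u_{k+1,ℓ} to true, J₃ additionally sets a to true, and all other issues
are set to false. -/
def Jp (k : Fin 3) : Issue n m → Bool := fun i => match i with
  | .x _ => true
  | .x' _ => true
  | .u k' _ => k' == k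
  | .a => k == 2
  | _ => false

/-- Cumulative Hamming distance of a ballot on a subagenda Ψ to the restricted
profile J⃗|_Ψ. -/
def DistOn (Ψ : Finset (Issue n m)) (r : ↥Ψ → Bool) : ℕ :=
  hamming r (restrict Ψ (Jp 0)) + hamming r (restrict Ψ (Jp 1)) +
    hamming r (restrict Ψ (Jp 2))

/-- Membership in the set of Kemeny outcomes of the restricted profile J⃗|_Ψ:
a rational ballot on Ψ minimizing the cumulative Hamming distance to J⃗|_Ψ among
all rational ballots on Ψ. -/
def kemenyOn (psi : (Fin n → Bool) → (Fin m → Bool) → Bool)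
    (Ψ : Finset (Issue n m)) (r : ↥Ψ → Bool) : Prop :=
  rationalOn psi Ψ r ∧ ∀ r' : ↥Ψ → Bool, rationalOn psi Ψ r' → DistOn Ψ r ≤ DistOn Ψ r'

/-- Indicator of membership in the initial subagenda Φ': all issues except the
x- and x'-issues. -/
def inPhi' : Issue n m → Bool := fun i => match i with
  | .x _ => false
  | .x' _ => false
  | _ => true

/-- The initial subagenda Φ'. -/
def Phi' (n m : ℕ) : Finset (Issue n m) :=
  Finset.univ.filter (fun i => inPhi' i = true)

theorem b_mem_Phi' : (Issue.b : Issue n m) ∈ Phi' n m :=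
  Finset.mem_filter.mpr ⟨Finset.mem_univ _, rfl⟩

/-- Indicator of membership in the subagenda Φ''_α: Φ' together with the issues x_i
with α(x_i) = true and the issues x'_i with α(x_i) = false. -/
def inPhiA (α : Fin n → Bool) : Issue n m → Bool := fun i => match i with
  | .x j => α j
  | .x' j => !(α j)
  | _ => true

/-- The subagenda Φ''_α. -/
def PhiA (α : Fin n → Bool) : Finset (Issue n m) :=
  Finset.univ.filter (fun i => inPhiA α i = true)

theorem b_mem_PhiA (α : Fin n → Bool) : (Issue.b : Issue n m) ∈ PhiA α :=
  Finset.mem_filter.mpr ⟨Finset.mem_univ _, rfl⟩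

/-- The ballot J*_α on Φ''_α: the included x-issues, all t-issues, and b true,
every other issue of Φ''_α false. -/
def JstarA (α : Fin n → Bool) : ↥(PhiA (m := m) α) → Bool := fun i => match i.1 with
  | .x _ => true
  | .x' _ => true
  | .t _ => true
  | .b => true
  | _ => false

end Ctrl

/-!
Extend `J*_α` to all of `Φ` by accepting every `x`- and `x'`-issue. As `b` and the `t`-issues are
accepted and `a`, the `y`- and the `y'`-issues rejected, `Γ₀` holds through the disjunct that does
not mention `ψ`. The distance is counted issue by issue instead of ballot by ballot: all three
ballots of the profile disagree with the extension on `b` and on each `t`-issue, exactly one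
disagrees on `a` and on each `u`-issue, and none on the other issues. In particular the issues
missing from `Φ''_α` would contribute nothing, so the total `3m + 1 + 3 + 3u` can be computed
over all of `Φ`.
-/

namespace Ctrl

variable {n m : ℕ} {psi : (Fin n → Bool) → (Fin m → Bool) → Bool} {r : Issue n m → Bool}

theorem Issue.sum_univ {M : Type*} [AddCommMonoid M] (f : Issue n m → M) :
    ∑ i, f i = ∑ i, f (.x i) + ∑ i, f (.x' i) + ∑ j, f (.y j) + ∑ j, f (.y' j) + ∑ j, f (.t j) +
      f .a + f .b + ∑ k, ∑ l, f (.u k l) := by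
  -- `Issue.proxyTypeEquiv` identifies `Issue n m` with an iterated sum type; it comes with the
  -- derived `Fintype` instance.
  rw [← (Issue.proxyTypeEquiv n m).sum_comp]
  simp only [Fintype.sum_sum_type, Fintype.sum_sigma, Fintype.sum_unique, add_assoc]
  rfl

theorem mem_phiA {α : Fin n → Bool} {i : Issue n m} : i ∈ PhiA α ↔ inPhiA α i = true := by
  simp only [PhiA, Finset.mem_filter_univ]

theorem rationalOn_restrict (Ψ : Finset (Issue n m)) (h : Gamma psi r) :
    rationalOn psi Ψ (restrict Ψ r) :=
  ⟨r, fun _ => rfl, h⟩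

theorem gamma0_of_b (hb : r .b = true) (ha : r .a = false) (ht : bigT r)
    (hy : ∀ j, r (.y j) = false) (hy' : ∀ j, r (.y' j) = false) : gamma0 psi r :=
  ⟨.inr hb, .inl ha, .inr ht, fun _ => .inr ⟨hb, fun j => ⟨ht j, hy j, hy' j⟩⟩⟩

theorem hamming_restrict (Ψ : Finset (Issue n m)) (r r' : Issue n m → Bool) :
    hamming (restrict Ψ r) (restrict Ψ r') = ∑ i ∈ Ψ, if r i ≠ r' i then 1 else 0 := by
  rw [hamming, Finset.card_filter]
  exact Finset.sum_coe_sort Ψ fun i => if r i ≠ r' i then 1 else 0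

/-- The number of ballots of the profile `J⃗` that disagree with `r` on the issue `i`, i.e. the
contribution of `i` to the cumulative Hamming distance of `r` to `J⃗`. -/
def numDissenters (r : Issue n m → Bool) (i : Issue n m) : ℕ :=
  (Finset.univ.filter fun k => r i ≠ Jp k i).card

theorem distOn_restrict (Ψ : Finset (Issue n m)) (r : Issue n m → Bool) :
    DistOn Ψ (restrict Ψ r) = ∑ i ∈ Ψ, numDissenters r i := by
  simp only [DistOn, hamming_restrict, numDissenters, Finset.card_filter, Fin.sum_univ_three,
    Finset.sum_add_distrib]

/-- The extension of the ballots `J*_α` to all of `Φ`. Accepting every `x`- and `x'`-issue makes it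
independent of `α`. -/
def JstarFull : Issue n m → Bool
  | .x _ => true
  | .x' _ => true
  | .t _ => true
  | .b => true
  | _ => false

theorem jstarA_eq_restrict (α : Fin n → Bool) :
    JstarA (m := m) α = restrict (PhiA α) JstarFull :=
  rfl

theorem gamma_jstarFull : Gamma psi JstarFull :=
  .inl (gamma0_of_b rfl rfl (fun _ => rfl) (fun _ => rfl) fun _ => rfl)

theorem rationalOn_jstarA (α : Fin n → Bool) : rationalOn psi (PhiA α) (JstarA α) := by
  rw [jstarA_eq_restrict]
  exact rationalOn_restrict _ gamma_jstarFull

theorem numDissenters_jstarFull_of_notMem {α : Fin n → Bool} {i : Issue n m}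
    (hi : i ∉ PhiA α) : numDissenters JstarFull i = 0 := by
  cases i with
  | x | x' => rfl
  | _ => exact (hi (mem_phiA.mpr rfl)).elim

theorem sum_numDissenters_jstarFull :
    ∑ i : Issue n m, numDissenters JstarFull i = 3 * m + 4 + 3 * (10 * n + 10 * m + 10) := by
  have hx (i : Fin n) : numDissenters JstarFull (.x i : Issue n m) = 0 := rfl
  have hx' (i : Fin n) : numDissenters JstarFull (.x' i : Issue n m) = 0 := rfl
  have hy (j : Fin m) : numDissenters JstarFull (.y j : Issue n m) = 0 := rfl
  have hy' (j : Fin m) : numDissenters JstarFull (.y' j : Issue n m) = 0 := rfl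
  have ht (j : Fin m) : numDissenters JstarFull (.t j : Issue n m) = 3 := rfl
  have ha : numDissenters JstarFull (.a : Issue n m) = 1 := rfl
  have hb : numDissenters JstarFull (.b : Issue n m) = 3 := rfl
  have hu (k : Fin 3) (l) : numDissenters JstarFull (.u k l : Issue n m) = 1 := by
    fin_cases k <;> rfl
  simp only [Issue.sum_univ, hx, hx', hy, hy', ht, ha, hb, hu, Finset.sum_const, Finset.card_univ,
    Fintype.card_fin, smul_eq_mul]
  ring

theorem distOn_jstarA (α : Fin n → Bool) :
    DistOn (PhiA α) (JstarA (m := m) α) = 3 * m + 4 + 3 * (10 * n + 10 * m + 10) :=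
  calc DistOn (PhiA α) (JstarA α)
    _ = ∑ i ∈ PhiA α, numDissenters JstarFull i := by
      rw [jstarA_eq_restrict, distOn_restrict]
    _ = ∑ i : Issue n m, numDissenters JstarFull i :=
      Finset.sum_subset (Finset.subset_univ _) fun _ _ => numDissenters_jstarFull_of_notMem
    _ = 3 * m + 4 + 3 * (10 * n + 10 * m + 10) := sum_numDissenters_jstarFull

end Ctrl

open Ctrl in
/-- for every α : X → Bool, the ballot J*_α on Φ''_α is rational,
sets the issue b to true, and has cumulative Hamming distance 3m + 4 + 3u to the
restricted profile J⃗|_{Φ''_α}. -/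
theorem ctrl_JstarA (n m : ℕ) (hn : 0 < n) (hm : 0 < m)
    (psi : (Fin n → Bool) → (Fin m → Bool) → Bool) (α : Fin n → Bool) :
    rationalOn psi (PhiA α) (JstarA (m := m) α) ∧
    JstarA (m := m) α ⟨Issue.b, b_mem_PhiA α⟩ = true ∧
    DistOn (PhiA α) (JstarA (m := m) α) = 3 * m + 4 + 3 * (10 * n + 10 * m + 10) :=
  ⟨rationalOn_jstarA α, rfl, distOn_jstarA α⟩
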